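/- Every natural number N can be written as the sum of three terms of the sequence (⌊n²/104⌋)_{n∈ℕ}, i.e., there exist natural numbers A, B, C with N = ⌊A²/104⌋ + ⌊B²/104⌋ + ⌊C²/104⌋. -/

import Mathlib

/-- Reduction of positive binary forms. -/
theorem bin_red (m : ℕ) : ∀ A B C D : ℤ, A.toNat ≤ m → 0 < A → 0 < D → A * C - B ^ 2 = D →
    ∃ α β γ δ : ℤ, α * δ - β * γ = 1 ∧ 0 < A * α ^ 2 + 2 * B * α * γ + C * γ ^ 2 ∧
      3 * (A * α ^ 2 + 2 * B * α * γ + C * γ ^ 2) ^ 2 ≤ 4 * D := by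
  induction m with
  | zero => intro A B C D h h1; omega
  | succ m ih =>
    intro A B C D hm hA hD hdet
    obtain ⟨k, hk1, hk2⟩ : ∃ k : ℤ, 2 * (B + k * A) ≤ A ∧ -A ≤ 2 * (B + k * A) := by
      refine ⟨-((2 * B + A) / (2 * A)), ?_, ?_⟩
      · have := Int.emod_add_mul_ediv (2 * B + A) (2 * A)
        have h2 := Int.emod_lt_of_pos (2 * B + A) (show 0 < 2 * A by linarith)
        nlinarith
      · have := Int.emod_add_mul_ediv (2 * B + A) (2 * A)
        have h2 := Int.emod_nonneg (2 * B + A) (show 2 * A ≠ 0 by linarith)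
        nlinarith
    obtain ⟨B', hB'⟩ : ∃ B', B' = B + k * A := ⟨_, rfl⟩
    obtain ⟨C', hC'⟩ : ∃ C', C' = C + 2 * k * B + k ^ 2 * A := ⟨_, rfl⟩
    rw [← hB'] at hk1 hk2
    have hdet' : A * C' - B' ^ 2 = D := by rw [← hdet, hB', hC']; ring
    have hsq : 4 * B' ^ 2 ≤ A ^ 2 := by nlinarith
    by_cases hlt : C' < A
    · have hC0 : 0 < C' := by
        by_contra h
        nlinarith [sq_nonneg B']
      obtain ⟨α, β, γ, δ, h1, h2, h3⟩ := ih C' (-B') A D (by omega) hC0 hD (by linarith)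
      have e : A * (k * α - γ) ^ 2 + 2 * B * (k * α - γ) * α + C * α ^ 2
          = C' * α ^ 2 + 2 * (-B') * α * γ + A * γ ^ 2 := by rw [hB', hC']; ring
      refine ⟨k * α - γ, k * β - δ, α, β, by linarith, ?_, ?_⟩
      · rw [e]; exact h2
      · rw [e]; exact h3
    · refine ⟨1, 0, 0, 1, by norm_num, by simpa using hA, ?_⟩
      have : A * A ≤ A * C' := mul_le_mul_of_nonneg_left (not_lt.mp hlt) hA.le
      nlinarith

theorem bin_sq (A B C : ℤ) (hA : 0 < A) (h : A * C - B ^ 2 = 1) (y z : ℤ) :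
    ∃ u v : ℤ, A * y ^ 2 + 2 * B * y * z + C * z ^ 2 = u ^ 2 + v ^ 2 := by
  obtain ⟨α, β, γ, δ, h1, h2, h3⟩ := bin_red _ A B C 1 le_rfl hA one_pos h
  have hA1 : A * α ^ 2 + 2 * B * α * γ + C * γ ^ 2 = 1 := by nlinarith
  refine ⟨(δ * y - β * z) + (A * α * β + B * (α * δ + β * γ) + C * γ * δ) * (α * z - γ * y),
    α * z - γ * y, ?_⟩
  obtain ⟨Y, hY⟩ : ∃ Y, Y = δ * y - β * z := ⟨_, rfl⟩
  obtain ⟨Z, hZ⟩ : ∃ Z, Z = α * z - γ * y := ⟨_, rfl⟩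
  have ey : y = α * Y + β * Z := by rw [hY, hZ]; linear_combination (-y) * h1
  have ez : z = γ * Y + δ * Z := by rw [hY, hZ]; linear_combination (-z) * h1
  rw [← hY, ← hZ]
  obtain ⟨P, hP⟩ : ∃ P, P = A * α * β + B * (α * δ + β * γ) + C * γ * δ := ⟨_, rfl⟩
  obtain ⟨Q, hQ⟩ : ∃ Q, Q = A * β ^ 2 + 2 * B * β * δ + C * δ ^ 2 := ⟨_, rfl⟩
  have hd : Q - P ^ 2 = 1 := by
    have : (A * α ^ 2 + 2 * B * α * γ + C * γ ^ 2) * Q - P ^ 2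
      = (A * C - B ^ 2) * (α * δ - β * γ) ^ 2 := by rw [hP, hQ]; ring
    rw [hA1, h, h1] at this; linarith
  rw [← hP, ey, ez]
  have : A * (α * Y + β * Z) ^ 2 + 2 * B * (α * Y + β * Z) * (γ * Y + δ * Z)
      + C * (γ * Y + δ * Z) ^ 2
      = (A * α ^ 2 + 2 * B * α * γ + C * γ ^ 2) * Y ^ 2 + 2 * P * Y * Z + Q * Z ^ 2 := by
    rw [hP, hQ]; ring
  rw [this, hA1]
  linear_combination Z ^ 2 * hd

theorem tern (m : ℕ) : ∀ a b c p q r : ℤ, a.toNat ≤ m → 0 < a → 0 < a * b - r ^ 2 →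
    a * b * c + 2 * p * q * r - a * p ^ 2 - b * q ^ 2 - c * r ^ 2 = 1 → ∀ x y z : ℤ,
    ∃ u v w : ℤ, a * x ^ 2 + b * y ^ 2 + c * z ^ 2 + 2 * p * y * z + 2 * q * x * z + 2 * r * x * y
      = u ^ 2 + v ^ 2 + w ^ 2 := by
  induction m with
  | zero => intro a b c p q r h h1; omega
  | succ m ih =>
    intro a b c p q r hm ha hab hdet x y z
    by_cases ha1 : a = 1
    · subst ha1
      obtain ⟨u, v, huv⟩ := bin_sq (1 * b - r ^ 2) (p - q * r) (c - q ^ 2) hab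
        (by linear_combination hdet) y z
      exact ⟨x + r * y + q * z, u, v, by linear_combination huv⟩
    have ha2 : 2 ≤ a := by omega
    obtain ⟨α, β, γ, δ, h1, h2, h3⟩ := bin_red _ (a * b - r ^ 2) (a * p - q * r) (a * c - q ^ 2) a
      le_rfl hab ha (by linear_combination a * hdet)
    obtain ⟨Y, hY⟩ : ∃ Y, Y = δ * y - β * z := ⟨_, rfl⟩
    obtain ⟨Z, hZ⟩ : ∃ Z, Z = α * z - γ * y := ⟨_, rfl⟩
    have ey : y = α * Y + β * Z := by rw [hY, hZ]; linear_combination (-y) * h1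
    have ez : z = γ * Y + δ * Z := by rw [hY, hZ]; linear_combination (-z) * h1
    obtain ⟨b', hb'⟩ : ∃ b', b' = b * α ^ 2 + 2 * p * α * γ + c * γ ^ 2 := ⟨_, rfl⟩
    obtain ⟨c', hc'⟩ : ∃ c', c' = b * β ^ 2 + 2 * p * β * δ + c * δ ^ 2 := ⟨_, rfl⟩
    obtain ⟨p', hp'⟩ : ∃ p', p' = b * α * β + p * (α * δ + β * γ) + c * γ * δ := ⟨_, rfl⟩
    obtain ⟨q', hq'⟩ : ∃ q', q' = r * β + q * δ := ⟨_, rfl⟩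
    obtain ⟨r', hr'⟩ : ∃ r', r' = r * α + q * γ := ⟨_, rfl⟩
    have hA' : (a * b - r ^ 2) * α ^ 2 + 2 * (a * p - q * r) * α * γ + (a * c - q ^ 2) * γ ^ 2
        = a * b' - r' ^ 2 := by rw [hb', hr']; ring
    rw [hA'] at h2 h3
    have hdet' : a * b' * c' + 2 * p' * q' * r' - a * p' ^ 2 - b' * q' ^ 2 - c' * r' ^ 2 = 1 := by
      have : a * b' * c' + 2 * p' * q' * r' - a * p' ^ 2 - b' * q' ^ 2 - c' * r' ^ 2 =
        (a * b * c + 2 * p * q * r - a * p ^ 2 - b * q ^ 2 - c * r ^ 2) * (α * δ - β * γ) ^ 2 := by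
        rw [hb', hc', hp', hq', hr']; ring
      rw [this, hdet, h1]; norm_num
    have hval : a * x ^ 2 + b * y ^ 2 + c * z ^ 2 + 2 * p * y * z + 2 * q * x * z + 2 * r * x * y
        = a * x ^ 2 + b' * Y ^ 2 + c' * Z ^ 2 + 2 * p' * Y * Z + 2 * q' * x * Z + 2 * r' * x * Y := by
      rw [hb', hc', hp', hq', hr', ey, ez]; ring
    rw [hval]
    clear hval hA' ey ez hY hZ hdet hab h1 hb' hc' hp' hq' hr'
    obtain ⟨k, hk1, hk2⟩ : ∃ k : ℤ, 2 * (r' + k * a) ≤ a ∧ -a ≤ 2 * (r' + k * a) := by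
      refine ⟨-((2 * r' + a) / (2 * a)), ?_, ?_⟩
      · have := Int.emod_add_mul_ediv (2 * r' + a) (2 * a)
        have h2 := Int.emod_lt_of_pos (2 * r' + a) (show 0 < 2 * a by linarith)
        nlinarith
      · have := Int.emod_add_mul_ediv (2 * r' + a) (2 * a)
        have h2 := Int.emod_nonneg (2 * r' + a) (show 2 * a ≠ 0 by linarith)
        nlinarith
    obtain ⟨R, hR⟩ : ∃ R, R = r' + k * a := ⟨_, rfl⟩
    obtain ⟨S, hS⟩ : ∃ S, S = b' + 2 * k * r' + k ^ 2 * a := ⟨_, rfl⟩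
    obtain ⟨A, hA⟩ : ∃ A, A = a * b' - r' ^ 2 := ⟨_, rfl⟩
    have hAS : a * S - R ^ 2 = A := by rw [hA, hR, hS]; ring
    rw [← hA] at h2 h3
    rw [← hR] at hk1 hk2
    have hsq : 4 * R ^ 2 ≤ a ^ 2 := by nlinarith
    have hS0 : 0 < S := by
      by_contra h
      nlinarith [sq_nonneg R]
    have hSa : S < a := by
      by_contra h
      have e1 : a * a ≤ a * S := mul_le_mul_of_nonneg_left (not_lt.mp h) ha.le
      have e2 : 3 * a ^ 2 ≤ 4 * A := by nlinarith
      have e3 : 6 * a ≤ 4 * A := by nlinarith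
      nlinarith
    obtain ⟨u, v, w, huvw⟩ := ih S a c' q' (p' + k * q') R (by omega) hS0 (by linarith)
      (by rw [hR, hS]; linear_combination hdet') Y (x - k * Y) Z
    refine ⟨u, v, w, ?_⟩
    rw [← huvw, hR, hS]; ring

theorem three_sq (n : ℕ) (hn : n % 8 = 3) : ∃ u v w : ℤ, (n : ℤ) = u ^ 2 + v ^ 2 + w ^ 2 := by
  obtain ⟨t, rfl⟩ : ∃ t, n = 8 * t + 3 := ⟨n / 8, by omega⟩
  have hcop : Nat.Coprime (4 * t + 1) (4 * (8 * t + 3)) := by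
    refine Nat.Coprime.mul_right ?_ ?_
    · rw [← Nat.isCoprime_iff_coprime]
      exact ⟨1, -t, by push_cast; ring⟩
    · rw [← Nat.isCoprime_iff_coprime]
      exact ⟨-2, 1, by push_cast; ring⟩
  have : NeZero (4 * (8 * t + 3)) := ⟨by omega⟩
  obtain ⟨p, hpgt, hp, hpmod⟩ := Nat.forall_exists_prime_gt_and_modEq (4 * t + 1)
    (by omega : 4 * (8 * t + 3) ≠ 0) hcop
  obtain ⟨v, hv⟩ : ∃ v, p = 4 * (8 * t + 3) * v + (4 * t + 1) := by
    have h1 := (Nat.modEq_iff_dvd' hpgt.le).mp hpmod.symm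
    obtain ⟨v, hv⟩ := h1
    exact ⟨v, by omega⟩
  have : Fact p.Prime := ⟨hp⟩
  set b : ℕ := 8 * v + 1 with hb
  have h2p : 2 * (p : ℤ) = b * (8 * t + 3) - 1 := by rw [hv, hb]; push_cast; ring
  have hp4 : p % 4 = 1 := by
    rw [hv]
    have : 4 * (8 * t + 3) * v + (4 * t + 1) = 4 * ((8 * t + 3) * v + t) + 1 := by ring
    omega
  have hbodd : Odd b := ⟨4 * v, by omega⟩
  have hpodd : Odd p := Nat.odd_iff.mpr (by omega)
  have hpb : jacobiSym (p : ℤ) b = 1 := by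
    have e : jacobiSym (-2 * p) b = 1 := by
      have : (-2 * (p : ℤ)) = 1 - b * (8 * t + 3) := by linarith
      rw [this, jacobiSym.mod_left]
      have : (1 - (b : ℤ) * (8 * t + 3)) % b = 1 % b := by
        apply Int.emod_emod_of_dvd _ (dvd_refl _) |>.symm.trans
        rw [Int.sub_mul_emod_self_left]
        simp
      rw [this, ← jacobiSym.mod_left, jacobiSym.one_left]
    rw [jacobiSym.mul_left, jacobiSym.at_neg_two hbodd] at e
    have hc : ZMod.χ₈' (b : ZMod 8) = 1 := by
      have : (b : ZMod 8) = 1 := by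
        rw [hb]; push_cast
        have : (8 : ZMod 8) = 0 := by decide
        rw [this]; ring
      rw [this]; decide
    rwa [hc, one_mul] at e
  have hneg : legendreSym p (-(b : ℤ)) = 1 := by
    rw [jacobiSym.legendreSym.to_jacobiSym, neg_eq_neg_one_mul, jacobiSym.mul_left,
      jacobiSym.at_neg_one hpodd, ZMod.χ₄_nat_one_mod_four hp4, one_mul,
      jacobiSym.quadratic_reciprocity_one_mod_four' hbodd hp4]
    exact hpb
  have hne : ((-(b : ℤ) : ℤ) : ZMod p) ≠ 0 := by
    intro h0
    rw [(legendreSym.eq_zero_iff p _).mpr h0] at hneg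
    exact absurd hneg (by norm_num)
  obtain ⟨s, hs⟩ := (legendreSym.eq_one_iff p hne).mp hneg
  obtain ⟨s0, rfl⟩ := ZMod.intCast_surjective s
  have hd0 : (p : ℤ) ∣ s0 ^ 2 + b := by
    rw [← ZMod.intCast_zmod_eq_zero_iff_dvd]
    push_cast at hs ⊢
    rw [sq, ← hs]; ring
  obtain ⟨s1, hs1, hodd⟩ : ∃ s1 : ℤ, (p : ℤ) ∣ s1 ^ 2 + b ∧ Odd s1 := by
    rcases Int.even_or_odd s0 with h | h
    · refine ⟨s0 + p, ?_, h.add_odd (by exact_mod_cast hpodd)⟩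
      have : (s0 + p) ^ 2 + (b : ℤ) = (s0 ^ 2 + b) + p * (2 * s0 + p) := by ring
      rw [this]
      exact dvd_add hd0 (dvd_mul_right _ _)
    · exact ⟨s0, hd0, h⟩
  have h2d : (2 : ℤ) ∣ s1 ^ 2 + b := by
    have : Even (s1 ^ 2 + (b : ℤ)) := (hodd.pow).add_odd (by exact_mod_cast hbodd)
    exact this.two_dvd
  have hcop2 : IsCoprime (2 : ℤ) p := by
    have : Nat.Coprime 2 p := (Nat.coprime_two_left).mpr hpodd
    exact_mod_cast Nat.isCoprime_iff_coprime.mpr this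
  obtain ⟨a, ha⟩ := hcop2.mul_dvd h2d hs1
  have hp0 : (0 : ℤ) < p := by exact_mod_cast hp.pos
  have hb0 : (0 : ℤ) < b := by rw [hb]; positivity
  have ha0 : 0 < a := by
    by_contra h
    nlinarith [sq_nonneg s1]
  obtain ⟨u, v, w, h⟩ := tern _ a (2 * p) (8 * t + 3) 0 1 s1 le_rfl ha0 (by nlinarith)
    (by linear_combination (-(8 * (t : ℤ) + 3)) * ha - h2p) 0 0 1
  exact ⟨u, v, w, by push_cast; linarith⟩

theorem sq_res : ∀ i < 104, i ^ 2 % 104 ∈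
    [0, 1, 4, 9, 12, 16, 17, 25, 36, 40, 48, 49, 52, 56, 64, 65, 68, 81, 88, 92, 100] := by
  decide +kernel

theorem res99 : ∀ i ∈ [0, 1, 4, 9, 12, 16, 17, 25, 36, 40, 48, 49, 52, 56, 64, 65, 68, 81, 88, 92, 100],
    ∀ j ∈ [0, 1, 4, 9, 12, 16, 17, 25, 36, 40, 48, 49, 52, 56, 64, 65, 68, 81, 88, 92, 100],
    ∀ k ∈ [0, 1, 4, 9, 12, 16, 17, 25, 36, 40, 48, 49, 52, 56, 64, 65, 68, 81, 88, 92, 100],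
    (i + j + k) % 104 = 99 → i + j + k = 99 := by
  decide +kernel

theorem stmt_8 (N : ℕ) :
    ∃ A B C : ℕ, N = A ^ 2 / 104 + B ^ 2 / 104 + C ^ 2 / 104 := by
  obtain ⟨u, v, w, h⟩ := three_sq (104 * N + 99) (by omega)
  refine ⟨u.natAbs, v.natAbs, w.natAbs, ?_⟩
  have h' : 104 * N + 99 = u.natAbs ^ 2 + v.natAbs ^ 2 + w.natAbs ^ 2 := by
    zify; simpa using h
  generalize u.natAbs = A at *
  generalize v.natAbs = B at *
  generalize w.natAbs = C at *
  have hr : ∀ X : ℕ, X ^ 2 % 104 ∈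
      [0, 1, 4, 9, 12, 16, 17, 25, 36, 40, 48, 49, 52, 56, 64, 65, 68, 81, 88, 92, 100] := by
    intro X
    rw [Nat.pow_mod]
    exact sq_res _ (Nat.mod_lt _ (by norm_num))
  have := res99 _ (hr A) _ (hr B) _ (hr C) (by omega)
  omega
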